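/- A function f : [0,1] → ℝ is uniformly continuous on [0,1] if and only if f is induced by a uniformly continuous code of a continuous function. -/

import Mathlib

open Filter

/-- A regular sequence of rationals: `|r n - r (n+1)| ≤ 2^(-(n+1))`. -/
def Regular (r : ℕ → ℚ) : Prop := ∀ n : ℕ, |r n - r (n + 1)| ≤ 1 / 2 ^ (n + 1)

/-- The real number determined by a (regular, hence Cauchy) sequence of rationals. -/
noncomputable def rlim (r : ℕ → ℚ) : ℝ := limUnder atTop fun n => (r n : ℝ)

/-- `x` is a regular sequence representing a real number in the unit interval. -/
noncomputable def InUnit (x : ℕ → ℚ) : Prop := Regular x ∧ rlim x ∈ Set.Icc (0 : ℝ) 1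

/-- `triN s` : numbering of the nodes of the ternary tree:
`N(⟨⟩) = 1`, `N(s * ⟨i⟩) = 2 * N(s) + i - 1`. -/
def triN (s : List (Fin 3)) : ℕ := s.foldl (fun a i => 2 * a + i.val - 1) 1

/-- Initial segment of length `n` of `α`. -/
def seg3 (α : ℕ → Fin 3) (n : ℕ) : List (Fin 3) := List.ofFn fun i : Fin n => α i

/-- `Phi α` is the limit of the Cauchy sequence `x_α^n = 2^(-(n+1)) * N(ᾱ n)`. -/
noncomputable def Phi (α : ℕ → Fin 3) : ℝ :=
  limUnder atTop fun n => (triN (seg3 α n) : ℝ) / 2 ^ (n + 1)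

/-- `f : [0,1] → ℝ` has a continuous modulus: a family `g k` of pointwise continuous
functions on the underlying set of regular sequences in `[0,1]` such that
`|x - y| ≤ 2^(-(g k x))` implies `|f x - f y| ≤ 2^(-k)`. -/
def HasContModulus (f : ℝ → ℝ) : Prop :=
  ∃ g : ℕ → (ℕ → ℚ) → ℕ,
    (∀ (k : ℕ) (x y : ℕ → ℚ), InUnit x → InUnit y →
      |rlim x - rlim y| ≤ 1 / 2 ^ g k x → |f (rlim x) - f (rlim y)| ≤ 1 / 2 ^ k) ∧
    (∀ (k : ℕ) (x : ℕ → ℚ), InUnit x → ∃ n : ℕ, ∀ y : ℕ → ℚ, InUnit y →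
      (∀ i < n, x i = y i) → g k x = g k y)

/-- `f : [0,1] → ℝ` has a continuous ternary modulus: a family `g k` of pointwise
continuous functions on `{0,1,2}^ℕ` such that `|Φ α - x| ≤ 2^(-(g k α))` implies
`|f (Φ α) - f x| ≤ 2^(-k)`. -/
def HasContTernModulus (f : ℝ → ℝ) : Prop :=
  ∃ g : ℕ → (ℕ → Fin 3) → ℕ,
    (∀ (k : ℕ) (α : ℕ → Fin 3), ∀ x ∈ Set.Icc (0 : ℝ) 1,
      |Phi α - x| ≤ 1 / 2 ^ g k α → |f (Phi α) - f x| ≤ 1 / 2 ^ k) ∧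
    (∀ (k : ℕ) (α : ℕ → Fin 3), ∃ n : ℕ, ∀ β : ℕ → Fin 3,
      seg3 α n = seg3 β n → g k α = g k β)

/-- `f : [0,1] → ℝ` is uniformly continuous on the unit interval, with a modulus `ω`. -/
def UnifContOn (f : ℝ → ℝ) : Prop :=
  ∃ ω : ℕ → ℕ, ∀ k : ℕ, ∀ x ∈ Set.Icc (0 : ℝ) 1, ∀ y ∈ Set.Icc (0 : ℝ) 1,
    |x - y| ≤ 1 / 2 ^ ω k → |f x - f y| ≤ 1 / 2 ^ k

/-- The rational interval `I_s = [2^(-(|s|+1))·(N s - 1), 2^(-(|s|+1))·(N s + 1)]`. -/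
def Iseg (s : List (Fin 3)) : ℚ × ℚ :=
  (((triN s : ℚ) - 1) / 2 ^ (s.length + 1), ((triN s : ℚ) + 1) / 2 ^ (s.length + 1))

/-- `I ≈ J`: the rational intervals `I` and `J` overlap. -/
def approxI (I J : ℚ × ℚ) : Prop := J.1 ≤ I.2 ∧ I.1 ≤ J.2

/-- A code of a continuous function (Loeb). -/
def IsCode (φ : List (Fin 3) → Option (ℚ × ℚ)) : Prop :=
  (∀ (s : List (Fin 3)) (p q : ℚ), φ s = some (p, q) → p ≤ q) ∧
  (∀ (k : ℕ) (α : ℕ → Fin 3), ∃ (n : ℕ) (p q : ℚ),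
    φ (seg3 α n) = some (p, q) ∧ q - p ≤ 1 / 2 ^ k) ∧
  (∀ (s : List (Fin 3)) (I : ℚ × ℚ), φ s = some I → ∀ i : Fin 3,
    ∃ J : ℚ × ℚ, φ (s ++ [i]) = some J ∧ I.1 ≤ J.1 ∧ J.2 ≤ I.2) ∧
  (∀ (s t : List (Fin 3)) (I J : ℚ × ℚ), φ s = some I → φ t = some J →
    approxI (Iseg s) (Iseg t) → approxI I J)

/-- At stage `n`, the code `φ` produces along `α` an interval of length `≤ 2^(-k)`. -/
def goodAt (φ : List (Fin 3) → Option (ℚ × ℚ)) (α : ℕ → Fin 3) (k n : ℕ) : Prop :=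
  ∃ p q : ℚ, φ (seg3 α n) = some (p, q) ∧ q - p ≤ 1 / 2 ^ k

open Classical in
/-- `hIdx φ α k` is the least `n` such that `φ (ᾱ n)` is an interval of length
`≤ 2^(-k)` (and `0` if there is none). -/
noncomputable def hIdx (φ : List (Fin 3) → Option (ℚ × ℚ)) (α : ℕ → Fin 3) (k : ℕ) : ℕ :=
  if h : ∃ n, goodAt φ α k n then Nat.find h else 0

/-- Left endpoint of an optional rational interval. -/
def leftOf (o : Option (ℚ × ℚ)) : ℚ := (o.getD (0, 0)).1

/-- `f` is induced by the code `φ`: for every `α`, `f (Φ α)` is the limit of the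
left endpoints of the intervals `φ (ᾱ (h_n α))`. -/
def InducedBy (f : ℝ → ℝ) (φ : List (Fin 3) → Option (ℚ × ℚ)) : Prop :=
  ∀ α : ℕ → Fin 3,
    Tendsto (fun n => (leftOf (φ (seg3 α (hIdx φ α n))) : ℝ)) atTop (nhds (f (Phi α)))

/-- The code `φ` is uniformly continuous. -/
def UnifCode (φ : List (Fin 3) → Option (ℚ × ℚ)) : Prop :=
  ∀ k : ℕ, ∃ n : ℕ, ∀ α : ℕ → Fin 3,
    ∃ p q : ℚ, φ (seg3 α n) = some (p, q) ∧ q - p ≤ 1 / 2 ^ k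

/-!
A code induces `f` exactly when the value of the code at every node `s` encloses `f` on `I_s`.

The three children of a cell of width `w` overlap so much that two points of the cell at distance
at most `w / 4` always share a child. Hence two points of `[0,1]` at distance at most `2^(-(n+1))`
lie in a common cell of level `n`, and a uniformly continuous code reads off a modulus of uniform
continuity of `f`. Conversely, the infimum and the supremum of a uniformly continuous `f` on each
cell, rounded outwards to multiples of `2^(-|s|)`, form a uniformly continuous code inducing `f`.
-/

lemma tendsto_of_dist_le_one_div_two_pow {X : Type*} [PseudoMetricSpace X] {u : ℕ → X} {a : X}
    (h : ∀ n, dist (u n) a ≤ 1 / 2 ^ n) : Tendsto u atTop (nhds a) :=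
  tendsto_iff_dist_tendsto_zero.mpr <| squeeze_zero (fun _ => dist_nonneg)
    (fun n => (h n).trans_eq (one_div_pow 2 n).symm)
    (tendsto_pow_atTop_nhds_zero_of_lt_one (by norm_num) (by norm_num))

lemma sSup_sub_sInf_le {A : Set ℝ} {ε : ℝ} (hε : 0 ≤ ε)
    (hA : ∀ a ∈ A, ∀ b ∈ A, dist a b ≤ ε) : sSup A - sInf A ≤ ε := by
  rw [← Real.diam_eq (Metric.isBounded_iff.mpr ⟨ε, hA⟩)]
  exact Metric.diam_le_of_forall_dist_le hε hA

/-! ### Dyadic rounding -/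

/-- The largest multiple of `2^(-n)` below `x`, as a rational number. -/
noncomputable def dyadicFloor (n : ℕ) (x : ℝ) : ℚ := ⌊2 ^ n * x⌋ / 2 ^ n

/-- The smallest multiple of `2^(-n)` above `x`, as a rational number; defined by reflection so
that its properties are those of `dyadicFloor`. -/
noncomputable def dyadicCeil (n : ℕ) (x : ℝ) : ℚ := -dyadicFloor n (-x)

lemma dyadicFloor_le (n : ℕ) (x : ℝ) : (dyadicFloor n x : ℝ) ≤ x := by
  have hfloor := Int.floor_le (2 ^ n * x)
  push_cast [dyadicFloor]
  rwa [div_le_iff₀' (by positivity)]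

lemma le_dyadicCeil (n : ℕ) (x : ℝ) : x ≤ dyadicCeil n x := by
  have := dyadicFloor_le n (-x)
  push_cast [dyadicCeil]
  linarith

lemma sub_one_div_two_pow_le_dyadicFloor (n : ℕ) (x : ℝ) : x - 1 / 2 ^ n ≤ dyadicFloor n x := by
  have hfloor := (Int.lt_floor_add_one (2 ^ n * x)).le
  push_cast [dyadicFloor]
  rwa [sub_le_iff_le_add, ← add_div, le_div_iff₀' (by positivity)]

lemma dyadicCeil_le_add_one_div_two_pow (n : ℕ) (x : ℝ) :
    (dyadicCeil n x : ℝ) ≤ x + 1 / 2 ^ n := by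
  have := sub_one_div_two_pow_le_dyadicFloor n (-x)
  push_cast [dyadicCeil]
  linarith

lemma dyadicFloor_le_dyadicFloor {m n : ℕ} {x y : ℝ} (hmn : m ≤ n) (hxy : x ≤ y) :
    dyadicFloor m x ≤ dyadicFloor n y := by
  obtain ⟨d, rfl⟩ := Nat.exists_eq_add_of_le hmn
  have hfloor : 2 ^ d * ⌊2 ^ m * x⌋ ≤ ⌊2 ^ (m + d) * y⌋ := by
    rw [Int.le_floor]
    push_cast
    calc (2 : ℝ) ^ d * ⌊2 ^ m * x⌋ ≤ 2 ^ d * (2 ^ m * y) := by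
          gcongr
          exact (Int.floor_le _).trans (by gcongr)
      _ = 2 ^ (m + d) * y := by ring
  have hfloor' : (2 : ℚ) ^ d * ⌊2 ^ m * x⌋ ≤ ⌊2 ^ (m + d) * y⌋ := by exact_mod_cast hfloor
  rw [dyadicFloor, dyadicFloor, div_le_div_iff₀ (by positivity) (by positivity)]
  calc (⌊2 ^ m * x⌋ : ℚ) * 2 ^ (m + d) = 2 ^ d * ⌊2 ^ m * x⌋ * 2 ^ m := by ring
    _ ≤ ⌊2 ^ (m + d) * y⌋ * 2 ^ m := by gcongr

lemma dyadicCeil_le_dyadicCeil {m n : ℕ} {x y : ℝ} (hmn : m ≤ n) (hxy : x ≤ y) :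
    dyadicCeil n x ≤ dyadicCeil m y :=
  neg_le_neg (dyadicFloor_le_dyadicFloor hmn (neg_le_neg hxy))

/-! ### Rational intervals -/

/-- The closed real interval with the endpoints of a pair of rationals. -/
def ratIcc (I : ℚ × ℚ) : Set ℝ := Set.Icc I.1 I.2

lemma fst_le_snd_of_mem_ratIcc {I : ℚ × ℚ} {x : ℝ} (hx : x ∈ ratIcc I) : I.1 ≤ I.2 := by
  exact_mod_cast hx.1.trans hx.2

lemma approxI_of_mem_ratIcc {I J : ℚ × ℚ} {x : ℝ} (hI : x ∈ ratIcc I) (hJ : x ∈ ratIcc J) :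
    approxI I J :=
  ⟨by exact_mod_cast hJ.1.trans hI.2, by exact_mod_cast hI.1.trans hJ.2⟩

lemma exists_mem_ratIcc_of_approxI {I J : ℚ × ℚ} (hI : I.1 ≤ I.2) (hJ : J.1 ≤ J.2)
    (hIJ : approxI I J) : ∃ x, x ∈ ratIcc I ∧ x ∈ ratIcc J := by
  refine ⟨(max I.1 J.1 : ℚ), ⟨?_, ?_⟩, ?_, ?_⟩
  · exact_mod_cast le_max_left _ _
  · exact_mod_cast max_le hI hIJ.1
  · exact_mod_cast le_max_right _ _
  · exact_mod_cast max_le hIJ.2 hJ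

lemma abs_sub_le_of_mem_ratIcc {I : ℚ × ℚ} {ε : ℚ} {x y : ℝ} (hx : x ∈ ratIcc I)
    (hy : y ∈ ratIcc I) (hI : I.2 - I.1 ≤ ε) : |x - y| ≤ ε :=
  (abs_sub_le_of_le_of_le hx.1 hx.2 hy.1 hy.2).trans (by exact_mod_cast hI)

/-! ### Cells of the ternary tree -/

lemma seg3_succ (α : ℕ → Fin 3) (n : ℕ) : seg3 α (n + 1) = seg3 α n ++ [α n] := by
  rw [seg3, List.ofFn_succ_last]
  simp [seg3]

lemma length_seg3 (α : ℕ → Fin 3) (n : ℕ) : (seg3 α n).length = n := by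
  simp [seg3]

lemma exists_seg3_length_eq (s : List (Fin 3)) : ∃ α, seg3 α s.length = s :=
  ⟨fun n => s.getD n 0, by simp [seg3]⟩

lemma exists_forall_seg3 {P : List (Fin 3) → Prop} (hnil : P [])
    (hsnoc : ∀ s, P s → ∃ i, P (s ++ [i])) : ∃ α, ∀ n, P (seg3 α n) := by
  choose! next hnext using hsnoc
  let node : ℕ → List (Fin 3) := Nat.rec [] fun _ s => s ++ [next s]
  have hseg : ∀ n, seg3 (fun m => next (node m)) n = node n := by
    intro n
    induction n with
    | zero => rfl
    | succ n ih => rw [seg3_succ, ih]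
  refine ⟨fun m => next (node m), fun n => ?_⟩
  rw [hseg]
  induction n with
  | zero => exact hnil
  | succ n ih => exact hnext _ ih

/-- The midpoint `2^(-(|s|+1)) * N(s)` of `I_s`. -/
noncomputable def center (s : List (Fin 3)) : ℝ := triN s / 2 ^ (s.length + 1)

/-- The set of reals in the rational interval `I_s`. -/
def cell (s : List (Fin 3)) : Set ℝ := ratIcc (Iseg s)

lemma triN_append_singleton (s : List (Fin 3)) (i : Fin 3) :
    triN (s ++ [i]) = 2 * triN s + i - 1 := by
  simp [triN]

lemma one_le_triN (s : List (Fin 3)) : 1 ≤ triN s := by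
  induction s using List.reverseRecOn with
  | nil => simp [triN]
  | append_singleton s i ih =>
    rw [triN_append_singleton]
    lia

lemma center_append_singleton (s : List (Fin 3)) (i : Fin 3) :
    center (s ++ [i]) = center s + (i - 1) / 2 ^ (s.length + 2) := by
  have htriN : triN (s ++ [i]) + 1 = 2 * triN s + i := by
    have := one_le_triN s
    rw [triN_append_singleton]
    lia
  have hcast : (triN (s ++ [i]) : ℝ) = 2 * triN s + i - 1 :=
    eq_sub_of_add_eq (by exact_mod_cast htriN)
  rw [center, center, hcast, List.length_append, List.length_singleton]
  field_simp
  ring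

lemma mem_cell_iff {s : List (Fin 3)} {x : ℝ} :
    x ∈ cell s ↔ |x - center s| ≤ 1 / 2 ^ (s.length + 1) := by
  rw [abs_sub_le_iff, sub_le_iff_le_add, sub_le_comm, center, ← add_div, ← sub_div, and_comm,
    add_comm (1 : ℝ)]
  simp [cell, ratIcc, Iseg]

lemma mem_cell_iff_quarters {s : List (Fin 3)} {x : ℝ} :
    x ∈ cell s ↔ |x - center s| ≤ 2 * (1 / 2 ^ (s.length + 2)) := by
  rw [mem_cell_iff, show (1 : ℝ) / 2 ^ (s.length + 1) = 2 * (1 / 2 ^ (s.length + 2)) by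
    field_simp; ring]

lemma mem_cell_append_singleton_iff {s : List (Fin 3)} {i : Fin 3} {x : ℝ} :
    x ∈ cell (s ++ [i]) ↔
      |x - center s - (i - 1) * (1 / 2 ^ (s.length + 2))| ≤ 1 / 2 ^ (s.length + 2) := by
  rw [mem_cell_iff, center_append_singleton, List.length_append, List.length_singleton,
    mul_one_div, sub_sub]

lemma abs_sub_le_of_mem_cell {s : List (Fin 3)} {x y : ℝ} (hx : x ∈ cell s) (hy : y ∈ cell s) :
    |x - y| ≤ 1 / 2 ^ s.length := by
  have hwidth : (Iseg s).2 - (Iseg s).1 ≤ 1 / 2 ^ s.length := by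
    apply le_of_eq
    simp only [Iseg]
    field_simp
    ring
  simpa using abs_sub_le_of_mem_ratIcc hx hy hwidth

lemma center_mem_cell (s : List (Fin 3)) : center s ∈ cell s := by
  rw [mem_cell_iff, sub_self, abs_zero]
  positivity

lemma cell_nil : cell [] = Set.Icc 0 1 := by
  norm_num [cell, ratIcc, Iseg, triN]

lemma cell_append_singleton_subset (s : List (Fin 3)) (i : Fin 3) :
    cell (s ++ [i]) ⊆ cell s := by
  intro x hx
  rw [mem_cell_append_singleton_iff] at hx
  rw [mem_cell_iff_quarters]
  have hδ : (0 : ℝ) ≤ 1 / 2 ^ (s.length + 2) := by positivity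
  generalize (1 : ℝ) / 2 ^ (s.length + 2) = δ at hx hδ ⊢
  have hi : (i : ℝ) ≤ 2 := by exact_mod_cast Fin.is_le i
  have hlower : 0 ≤ i * δ := by positivity
  have hupper : i * δ ≤ 2 * δ := by gcongr
  rw [abs_le] at hx ⊢
  constructor <;> linarith

lemma cell_subset_Icc (s : List (Fin 3)) : cell s ⊆ Set.Icc 0 1 := by
  induction s using List.reverseRecOn with
  | nil => exact cell_nil.subset
  | append_singleton s i ih => exact (cell_append_singleton_subset s i).trans ih

lemma exists_mem_cell_append_singleton {s : List (Fin 3)} {x y : ℝ} (hx : x ∈ cell s)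
    (hy : y ∈ cell s) (hxy : |x - y| ≤ 1 / 2 ^ (s.length + 2)) :
    ∃ i, x ∈ cell (s ++ [i]) ∧ y ∈ cell (s ++ [i]) := by
  wlog hle : x ≤ y generalizing x y
  · obtain ⟨i, hi⟩ := this hy hx (abs_sub_comm x y ▸ hxy) (le_of_not_ge hle)
    exact ⟨i, hi.symm⟩
  simp only [mem_cell_append_singleton_iff]
  rw [mem_cell_iff_quarters] at hx hy
  generalize (1 : ℝ) / 2 ^ (s.length + 2) = δ at *
  simp only [abs_le] at *
  by_cases hy_left : y ≤ center s
  · refine ⟨0, ?_⟩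
    simp only [Fin.val_zero, Nat.cast_zero]
    grind
  by_cases hx_right : center s ≤ x
  · refine ⟨2, ?_⟩
    simp only [Fin.val_two, Nat.cast_ofNat]
    grind
  · refine ⟨1, ?_⟩
    simp only [Fin.val_one, Nat.cast_one]
    grind

lemma exists_length_eq_mem_cell {x y : ℝ} (hx : x ∈ Set.Icc (0 : ℝ) 1)
    (hy : y ∈ Set.Icc (0 : ℝ) 1) (n : ℕ) (hxy : |x - y| ≤ 1 / 2 ^ (n + 1)) :
    ∃ s : List (Fin 3), s.length = n ∧ x ∈ cell s ∧ y ∈ cell s := by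
  induction n with
  | zero => exact ⟨[], rfl, cell_nil ▸ hx, cell_nil ▸ hy⟩
  | succ n ih =>
    obtain ⟨s, rfl, hxs, hys⟩ := ih (hxy.trans (by gcongr <;> norm_num))
    obtain ⟨i, hi⟩ := exists_mem_cell_append_singleton hxs hys hxy
    exact ⟨s ++ [i], by simp, hi⟩

lemma exists_forall_mem_cell_seg3 {x : ℝ} (hx : x ∈ Set.Icc (0 : ℝ) 1) :
    ∃ α, ∀ n, x ∈ cell (seg3 α n) :=
  exists_forall_seg3 (P := fun s => x ∈ cell s) (cell_nil ▸ hx) fun s hs => by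
    have hdist : |x - x| ≤ 1 / 2 ^ (s.length + 2) := by
      rw [sub_self, abs_zero]
      positivity
    obtain ⟨i, hi, -⟩ := exists_mem_cell_append_singleton hs hs hdist
    exact ⟨i, hi⟩

lemma Phi_eq_of_forall_mem_cell {α : ℕ → Fin 3} {x : ℝ} (hx : ∀ n, x ∈ cell (seg3 α n)) :
    Phi α = x := by
  refine (tendsto_of_dist_le_one_div_two_pow fun n => ?_).limUnder_eq
  have hcenter := mem_cell_iff.mp (hx n)
  rw [center, length_seg3, abs_sub_comm, ← Real.dist_eq] at hcenter
  exact hcenter.trans (by gcongr <;> norm_num)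

lemma Phi_mem_cell (α : ℕ → Fin 3) (n : ℕ) : Phi α ∈ cell (seg3 α n) := by
  obtain ⟨x, hx⟩ := IsCompact.nonempty_iInter_of_sequence_nonempty_isCompact_isClosed
    (fun n => cell (seg3 α n))
    (fun n => seg3_succ α n ▸ cell_append_singleton_subset _ _)
    (fun n => ⟨_, center_mem_cell _⟩) isCompact_Icc (fun _ => isClosed_Icc)
  rw [Set.mem_iInter] at hx
  exact Phi_eq_of_forall_mem_cell hx ▸ hx n

/-! ### Codes enclosing a function -/

/-- Every value `φ s` of the code is an interval containing the image of `I_s` under `f`. -/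
def Encloses (φ : List (Fin 3) → Option (ℚ × ℚ)) (f : ℝ → ℝ) : Prop :=
  ∀ s I, φ s = some I → Set.MapsTo f (cell s) (ratIcc I)

section

variable {φ : List (Fin 3) → Option (ℚ × ℚ)} {f : ℝ → ℝ}

lemma exists_code_hIdx_eq {α : ℕ → Fin 3} {k : ℕ} (h : ∃ n, goodAt φ α k n) :
    ∃ p q, φ (seg3 α (hIdx φ α k)) = some (p, q) ∧ q - p ≤ 1 / 2 ^ k ∧
      leftOf (φ (seg3 α (hIdx φ α k))) = p := by
  classical
  obtain ⟨p, q, hpq, hwidth⟩ : goodAt φ α k (hIdx φ α k) := by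
    rw [hIdx, dif_pos h]
    convert Nat.find_spec h
  exact ⟨p, q, hpq, hwidth, by simp [hpq, leftOf]⟩

lemma Encloses.inducedBy (hf : Encloses φ f) (hφ : ∀ k α, ∃ n, goodAt φ α k n) :
    InducedBy f φ := by
  refine fun α => tendsto_of_dist_le_one_div_two_pow fun n => ?_
  obtain ⟨p, q, hpq, hwidth, hleft⟩ := exists_code_hIdx_eq (hφ n α)
  have hmem := hf _ _ hpq (Phi_mem_cell α _)
  have hp : (p : ℝ) ∈ ratIcc (p, q) := ⟨le_rfl, hmem.1.trans hmem.2⟩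
  rw [hleft, Real.dist_eq]
  simpa using abs_sub_le_of_mem_ratIcc hp hmem hwidth

/-- The small intervals `φ (ᾱ (h_n α))` along an expansion `α` of `x ∈ I_s` overlap `φ s`, because
the corresponding cells share the point `x`; so their limit `f x` lies in `φ s`. -/
lemma IsCode.encloses_of_inducedBy (hφ : IsCode φ) (hf : InducedBy f φ) : Encloses φ f := by
  obtain ⟨-, hshrink, -, hoverlap⟩ := hφ
  intro s I hI x hx
  obtain ⟨α, hα⟩ := exists_forall_mem_cell_seg3 (cell_subset_Icc s hx)
  have hlim := hf α
  rw [Phi_eq_of_forall_mem_cell hα] at hlim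
  have hbounds : ∀ n, I.1 ≤ leftOf (φ (seg3 α (hIdx φ α n))) + 1 / 2 ^ n ∧
      leftOf (φ (seg3 α (hIdx φ α n))) ≤ I.2 := by
    intro n
    obtain ⟨p, q, hpq, hwidth, hleft⟩ := exists_code_hIdx_eq (hshrink n α)
    obtain ⟨hp, hq⟩ := hoverlap _ _ _ _ hI hpq (approxI_of_mem_ratIcc hx (hα _))
    rw [hleft]
    exact ⟨by linarith, hp⟩
  have hzero : Tendsto (fun n : ℕ => (1 : ℝ) / 2 ^ n) atTop (nhds 0) :=
    tendsto_of_dist_le_one_div_two_pow fun n => by simp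
  constructor
  · refine ge_of_tendsto' (add_zero (f x) ▸ hlim.add hzero) fun n => ?_
    simpa using (Rat.cast_le (K := ℝ)).mpr (hbounds n).1
  · exact le_of_tendsto' hlim fun n => by exact_mod_cast (hbounds n).2

lemma UnifCode.exists_forall_length_eq (hφ : UnifCode φ) (k : ℕ) :
    ∃ n, ∀ s : List (Fin 3), s.length = n →
      ∃ p q, φ s = some (p, q) ∧ q - p ≤ 1 / 2 ^ k := by
  obtain ⟨n, hn⟩ := hφ k
  refine ⟨n, fun s hs => ?_⟩
  obtain ⟨α, hα⟩ := exists_seg3_length_eq s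
  exact hα ▸ hs ▸ hn α

lemma Encloses.unifContOn (hf : Encloses φ f) (hφ : UnifCode φ) : UnifContOn f := by
  choose level hlevel using hφ.exists_forall_length_eq
  refine ⟨fun k => level k + 1, fun k x hx y hy hxy => ?_⟩
  obtain ⟨s, hs, hxs, hys⟩ := exists_length_eq_mem_cell hx hy _ hxy
  obtain ⟨p, q, hpq, hwidth⟩ := hlevel k s hs
  simpa using abs_sub_le_of_mem_ratIcc (hf s _ hpq hxs) (hf s _ hpq hys) hwidth

lemma Encloses.isCode (hf : Encloses φ f) (hshrink : ∀ k α, ∃ n, goodAt φ α k n)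
    (hnested : ∀ s I, φ s = some I → ∀ i,
      ∃ J, φ (s ++ [i]) = some J ∧ I.1 ≤ J.1 ∧ J.2 ≤ I.2) : IsCode φ := by
  refine ⟨fun s p q hpq => ?_, hshrink, hnested, fun s t I J hI hJ hst => ?_⟩
  · exact fst_le_snd_of_mem_ratIcc (hf s _ hpq (center_mem_cell s))
  · obtain ⟨x, hxs, hxt⟩ := exists_mem_ratIcc_of_approxI
      (fst_le_snd_of_mem_ratIcc (center_mem_cell s))
      (fst_le_snd_of_mem_ratIcc (center_mem_cell t)) hst
    exact approxI_of_mem_ratIcc (hf s I hI hxs) (hf t J hJ hxt)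

end

/-! ### The code of a uniformly continuous function -/

/-- The code of `f` whose value at `s` is the hull of `f '' I_s`, rounded outwards to multiples of
`2^(-|s|)`. It is total, and meaningful when `f` is bounded on `[0,1]` (otherwise `sInf` and `sSup`
may take junk values). -/
noncomputable def hullCode (f : ℝ → ℝ) (s : List (Fin 3)) : Option (ℚ × ℚ) :=
  some (dyadicFloor s.length (sInf (f '' cell s)), dyadicCeil s.length (sSup (f '' cell s)))

section

variable {f : ℝ → ℝ}

lemma encloses_hullCode (hf : Bornology.IsBounded (f '' Set.Icc 0 1)) :
    Encloses (hullCode f) f := by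
  rintro s _ ⟨⟩ x hx
  have hbdd := hf.subset (Set.image_mono (cell_subset_Icc s))
  have hfx := Set.mem_image_of_mem f hx
  exact ⟨(dyadicFloor_le _ _).trans (csInf_le hbdd.bddBelow hfx),
    (le_csSup hbdd.bddAbove hfx).trans (le_dyadicCeil _ _)⟩

lemma exists_hullCode_append_singleton_eq (hf : Bornology.IsBounded (f '' Set.Icc 0 1))
    {s : List (Fin 3)} {I : ℚ × ℚ} (hI : hullCode f s = some I) (i : Fin 3) :
    ∃ J, hullCode f (s ++ [i]) = some J ∧ I.1 ≤ J.1 ∧ J.2 ≤ I.2 := by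
  obtain rfl := Option.some.inj hI
  have hbdd := hf.subset (Set.image_mono (cell_subset_Icc s))
  have hne : (f '' cell (s ++ [i])).Nonempty := ⟨_, Set.mem_image_of_mem f (center_mem_cell _)⟩
  have hsub : f '' cell (s ++ [i]) ⊆ f '' cell s :=
    Set.image_mono (cell_append_singleton_subset s i)
  have hlength : s.length ≤ (s ++ [i]).length := by simp
  exact ⟨_, rfl, dyadicFloor_le_dyadicFloor hlength (csInf_le_csInf hbdd.bddBelow hne hsub),
    dyadicCeil_le_dyadicCeil hlength (csSup_le_csSup hbdd.bddAbove hne hsub)⟩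

lemma UnifContOn.isBounded_image (hf : UnifContOn f) :
    Bornology.IsBounded (f '' Set.Icc 0 1) := by
  obtain ⟨ω, hω⟩ := hf
  have hcont : ContinuousOn f (Set.Icc 0 1) := by
    refine Metric.continuousOn_iff.mpr fun x hx ε hε => ?_
    obtain ⟨k, hk⟩ := exists_pow_lt_of_lt_one hε (show (1 / 2 : ℝ) < 1 by norm_num)
    refine ⟨1 / 2 ^ ω k, by positivity, fun y hy hyx => ?_⟩
    exact (hω k y hy x hx hyx.le).trans_lt (one_div_pow (2 : ℝ) k ▸ hk)
  exact (isCompact_Icc.image_of_continuousOn hcont).isBounded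

lemma UnifContOn.unifCode_hullCode (hf : UnifContOn f) : UnifCode (hullCode f) := by
  obtain ⟨ω, hω⟩ := hf
  intro k
  refine ⟨max (ω (k + 1)) (k + 2), fun α => ⟨_, _, rfl, ?_⟩⟩
  set s := seg3 α (max (ω (k + 1)) (k + 2))
  have hlength : s.length = max (ω (k + 1)) (k + 2) := length_seg3 _ _
  have hosc : sSup (f '' cell s) - sInf (f '' cell s) ≤ 1 / 2 ^ (k + 1) := by
    refine sSup_sub_sInf_le (by positivity) ?_
    rintro _ ⟨x, hx, rfl⟩ _ ⟨y, hy, rfl⟩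
    refine hω (k + 1) x (cell_subset_Icc s hx) y (cell_subset_Icc s hy) ?_
    refine (abs_sub_le_of_mem_cell hx hy).trans ?_
    gcongr
    · norm_num
    · exact hlength ▸ le_max_left _ _
  have hround : (1 : ℝ) / 2 ^ s.length ≤ 1 / 2 ^ (k + 2) := by
    gcongr
    · norm_num
    · exact hlength ▸ le_max_right _ _
  have hfloor := sub_one_div_two_pow_le_dyadicFloor s.length (sInf (f '' cell s))
  have hceil := dyadicCeil_le_add_one_div_two_pow s.length (sSup (f '' cell s))
  have hsum : (1 : ℝ) / 2 ^ (k + 1) + 2 * (1 / 2 ^ (k + 2)) = 1 / 2 ^ k := by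
    field_simp
    ring
  rw [← Rat.cast_le (K := ℝ)]
  push_cast
  linarith

end

theorem stmt19 (f : ℝ → ℝ) :
    UnifContOn f ↔
      ∃ φ : List (Fin 3) → Option (ℚ × ℚ), IsCode φ ∧ UnifCode φ ∧ InducedBy f φ := by
  constructor
  · intro hf
    have hunif := hf.unifCode_hullCode
    have hencl := encloses_hullCode hf.isBounded_image
    have hshrink : ∀ k α, ∃ n, goodAt (hullCode f) α k n :=
      fun k α => (hunif k).imp fun _ hn => hn α
    have hcode := hencl.isCode hshrink fun s I hI =>
      exists_hullCode_append_singleton_eq hf.isBounded_image hI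
    exact ⟨hullCode f, hcode, hunif, hencl.inducedBy hshrink⟩
  · rintro ⟨φ, hcode, hunif, hind⟩
    exact (hcode.encloses_of_inducedBy hind).unifContOn hunif
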